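/- Convergence argument in the proof of Theorem 5.3 (abstract real-sequence form). Let d ≥ 1 and a ≥ 1 be integers, let m : ℕ → ℕ satisfy m_{n+1} = m_n + d for all n ≥ a, and let l : ℕ → ℕ satisfy l_{n+1} = l_n + d·(n+1) for all n ≥ a with l_a ≥ 1. For each j ∈ {1,…,d} let τ_j ∈ [0,∞) and let (t_{s,j})_{s≥a} and (τ_{s,j})_{s≥a} be sequences in [0,∞) with lim_{s→∞} t_{s,j} = τ_j and lim_{s→∞} τ_{s,j} = τ_j. Let (V_n)_{n≥a} be a sequence of strictly positive reals such that for all n ≥ a: V_n·∏_{j=1}^d (t_{n+1,j})^{n+1} ≤ V_{n+1} ≤ V_n·( ∏_{i=1}^d (m_n+i) )·∏_{j=1}^d (τ_{n+1,j})^{n+1}. Then the sequence (V_n^{1/l_n})_{n≥a} converges and lim_{n→∞} V_n^{1/l_n} = ( ∏_{j=1}^d τ_j )^{1/d}. -/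

import Mathlib

open Filter Topology

theorem aux_tendsto (l : ℕ → ℕ) (hlt : Tendsto l atTop atTop) (C c : ℝ) (hC : 0 < C) :
    Tendsto (fun n => C ^ ((1 : ℝ) / (l n : ℝ)) * c) atTop (𝓝 c) := by
  have h1 : Tendsto (fun n => (1 : ℝ) / (l n : ℝ)) atTop (𝓝 0) :=
    tendsto_one_div_atTop_nhds_zero_nat.comp hlt
  have h2 : Tendsto (fun n => C ^ ((1 : ℝ) / (l n : ℝ))) atTop (𝓝 (C ^ (0 : ℝ))) :=
    (Real.continuousAt_const_rpow hC.ne').tendsto.comp h1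
  simpa using h2.mul_const c

theorem aux_root (C c : ℝ) (hC : 0 < C) (hc : 0 < c) (k : ℕ) (hk : k ≠ 0) :
    (C * c ^ k) ^ ((1 : ℝ) / (k : ℝ)) = C ^ ((1 : ℝ) / (k : ℝ)) * c := by
  rw [Real.mul_rpow hC.le (by positivity), one_div, Real.pow_rpow_inv_natCast hc.le hk]

theorem aux_upper (d N : ℕ) (l : ℕ → ℕ) (hlt : Tendsto l atTop atTop)
    (hl : ∀ n, N ≤ n → l (n + 1) = l n + d * (n + 1))
    (V : ℕ → ℝ) (hV : ∀ n, N ≤ n → 0 < V n) (c b : ℝ) (hc : 0 < c) (hcb : c < b)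
    (h : ∀ n, N ≤ n → V (n + 1) ≤ V n * (c ^ d) ^ (n + 1)) :
    ∀ᶠ n in atTop, V n ^ ((1 : ℝ) / (l n : ℝ)) < b := by
  set C := V N / c ^ l N with hCdef
  have hC : 0 < C := div_pos (hV N le_rfl) (by positivity)
  have key : ∀ n, N ≤ n → V n ≤ C * c ^ l n := by
    intro n hn
    induction n, hn using Nat.le_induction with
    | base => rw [hCdef]; field_simp; exact le_rfl
    | succ n hn ih =>
      calc V (n + 1) ≤ V n * (c ^ d) ^ (n + 1) := h n hn
        _ ≤ C * c ^ l n * (c ^ d) ^ (n + 1) := by gcongr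
        _ = C * c ^ l (n + 1) := by rw [hl n hn, pow_add c, pow_mul, mul_assoc]
  filter_upwards [(aux_tendsto l hlt C c hC).eventually_lt_const hcb, eventually_ge_atTop N,
    hlt.eventually_ge_atTop 1] with n h1 h2 h3
  refine lt_of_le_of_lt ?_ h1
  rw [← aux_root C c hC hc (l n) (by omega)]
  exact Real.rpow_le_rpow (hV n h2).le (key n h2) (by positivity)

theorem aux_lower (d N : ℕ) (l : ℕ → ℕ) (hlt : Tendsto l atTop atTop)
    (hl : ∀ n, N ≤ n → l (n + 1) = l n + d * (n + 1))
    (V : ℕ → ℝ) (hV : ∀ n, N ≤ n → 0 < V n) (c b : ℝ) (hc : 0 < c) (hcb : b < c)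
    (h : ∀ n, N ≤ n → V n * (c ^ d) ^ (n + 1) ≤ V (n + 1)) :
    ∀ᶠ n in atTop, b < V n ^ ((1 : ℝ) / (l n : ℝ)) := by
  set C := V N / c ^ l N with hCdef
  have hC : 0 < C := div_pos (hV N le_rfl) (by positivity)
  have key : ∀ n, N ≤ n → C * c ^ l n ≤ V n := by
    intro n hn
    induction n, hn using Nat.le_induction with
    | base => rw [hCdef]; field_simp; exact le_rfl
    | succ n hn ih =>
      calc C * c ^ l (n + 1) = C * c ^ l n * (c ^ d) ^ (n + 1) := by
            rw [hl n hn, pow_add c, pow_mul, mul_assoc]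
        _ ≤ V n * (c ^ d) ^ (n + 1) := by gcongr
        _ ≤ V (n + 1) := h n hn
  filter_upwards [(aux_tendsto l hlt C c hC).eventually_const_lt hcb, eventually_ge_atTop N,
    hlt.eventually_ge_atTop 1] with n h1 h2 h3
  refine lt_of_lt_of_le h1 ?_
  rw [← aux_root C c hC hc (l n) (by omega)]
  exact Real.rpow_le_rpow (by positivity) (key n h2) (by positivity)

theorem aux_growth (A r : ℝ) (hr : 1 < r) :
    ∀ᶠ n : ℕ in atTop, A * ((n : ℝ) + 1) ≤ r ^ (n + 1) := by
  have h := ((tendsto_pow_const_div_const_pow_of_one_lt 1 hr).const_mul A).comp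
    (tendsto_add_atTop_nat 1)
  rw [mul_zero] at h
  filter_upwards [h.eventually_lt_const one_pos] with n hn
  have hp : 0 < r ^ (n + 1) := by positivity
  simp only [Function.comp, pow_one, Nat.cast_add, Nat.cast_one] at hn
  rw [← mul_div_assoc, div_lt_one hp] at hn
  exact hn.le

/-- Convergence argument in the proof of Theorem 5.3 (abstract real-sequence form):
if `V_n·∏_j t_{n+1,j}^{n+1} ≤ V_{n+1} ≤ V_n·(∏_{i=1}^d (m_n+i))·∏_j τ_{n+1,j}^{n+1}` with
`t_{s,j}, τ_{s,j} → τ_j`, `m_{n+1} = m_n + d` and `l_{n+1} = l_n + d(n+1)`, then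
`V_n^{1/l_n} → (∏_j τ_j)^{1/d}`. -/
theorem thm_5_3_convergence (d a : ℕ) (hd : 1 ≤ d) (ha : 1 ≤ a)
    (m l : ℕ → ℕ)
    (hm : ∀ n, a ≤ n → m (n + 1) = m n + d)
    (hl : ∀ n, a ≤ n → l (n + 1) = l n + d * (n + 1))
    (hla : 1 ≤ l a)
    (τ : Fin d → ℝ) (hτ : ∀ j, 0 ≤ τ j)
    (t T : ℕ → Fin d → ℝ)
    (ht0 : ∀ s, a ≤ s → ∀ j, 0 ≤ t s j)
    (hT0 : ∀ s, a ≤ s → ∀ j, 0 ≤ T s j)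
    (htlim : ∀ j, Tendsto (fun s => t s j) atTop (𝓝 (τ j)))
    (hTlim : ∀ j, Tendsto (fun s => T s j) atTop (𝓝 (τ j)))
    (V : ℕ → ℝ) (hV : ∀ n, a ≤ n → 0 < V n)
    (hlow : ∀ n, a ≤ n → V n * ∏ j, t (n + 1) j ^ (n + 1) ≤ V (n + 1))
    (hup : ∀ n, a ≤ n → V (n + 1) ≤
      V n * (∏ i : Fin d, ((m n : ℝ) + (i : ℕ) + 1)) * ∏ j, T (n + 1) j ^ (n + 1)) :
    Tendsto (fun n => V n ^ ((1 : ℝ) / (l n : ℝ))) atTop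
      (𝓝 ((∏ j, τ j) ^ ((1 : ℝ) / (d : ℝ)))) := by
  have hlt : Tendsto l atTop atTop := by
    have h : ∀ n, a ≤ n → n ≤ l n + a := by
      intro n hn
      induction n, hn using Nat.le_induction with
      | base => omega
      | succ n hn ih =>
        have : 1 ≤ d * (n + 1) := Nat.mul_pos hd (by omega)
        rw [hl n hn]; omega
    refine tendsto_atTop_mono' atTop ?_ (tendsto_sub_atTop_nat a)
    filter_upwards [eventually_ge_atTop a] with n hn
    have := h n hn
    omega
  have hmb : ∀ n, a ≤ n → m n ≤ m a + d * n := by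
    intro n hn
    induction n, hn using Nat.le_induction with
    | base => omega
    | succ n hn ih => rw [hm n hn, mul_add]; omega
  have hd0 : d ≠ 0 := by omega
  have hP : 0 ≤ ∏ j, τ j := Finset.prod_nonneg fun j _ => hτ j
  have hp : Tendsto (fun n => ∏ j, t (n + 1) j) atTop (𝓝 (∏ j, τ j)) :=
    (tendsto_finsetProd _ fun j _ => htlim j).comp (tendsto_add_atTop_nat 1)
  have hq : Tendsto (fun n => ∏ j, T (n + 1) j) atTop (𝓝 (∏ j, τ j)) :=
    (tendsto_finsetProd _ fun j _ => hTlim j).comp (tendsto_add_atTop_nat 1)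
  set P := ∏ j, τ j with hPdef
  set L := P ^ ((1 : ℝ) / (d : ℝ)) with hLdef
  have hL : 0 ≤ L := Real.rpow_nonneg hP _
  have hLP : L ^ d = P := by
    rw [hLdef, one_div, Real.rpow_inv_natCast_pow hP hd0]
  rw [tendsto_order]
  constructor
  · intro b hb
    rcases lt_or_ge b 0 with hb0 | hb0
    · filter_upwards [eventually_ge_atTop a] with n hn
      exact lt_of_lt_of_le hb0 (Real.rpow_nonneg (hV n hn).le _)
    obtain ⟨c, hbc, hcL⟩ := exists_between hb
    have hc : 0 < c := lt_of_le_of_lt hb0 hbc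
    have hcP : c ^ d < P := by rw [← hLP]; exact pow_lt_pow_left₀ hcL hc.le hd0
    obtain ⟨N, hN⟩ := eventually_atTop.1
      ((hp.eventually_const_lt hcP).and (eventually_ge_atTop a))
    refine aux_lower d N l hlt (fun n hn => hl n (hN n hn).2) V
      (fun n hn => hV n (hN n hn).2) c b hc hbc ?_
    intro n hn
    refine le_trans ?_ (hlow n (hN n hn).2)
    rw [Finset.prod_pow]
    have := (hV n (hN n hn).2).le
    have := (hN n hn).1.le
    gcongr
  · intro b hb
    obtain ⟨c, hLc, hcb⟩ := exists_between hb
    obtain ⟨e, hLe, hec⟩ := exists_between hLc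
    have he : 0 < e := lt_of_le_of_lt hL hLe
    have hc : 0 < c := he.trans hec
    have hPe : P < e ^ d := by rw [← hLP]; exact pow_lt_pow_left₀ hLe hL hd0
    have hr : 1 < c / e := by rwa [one_lt_div he]
    obtain ⟨N, hN⟩ := eventually_atTop.1
      (((hq.eventually_lt_const hPe).and (eventually_ge_atTop a)).and
        (aux_growth ((m a : ℝ) + d) (c / e) hr))
    refine aux_upper d N l hlt (fun n hn => hl n (hN n hn).1.2) V
      (fun n hn => hV n (hN n hn).1.2) c b hc hcb ?_
    intro n hn
    obtain ⟨⟨h1, h2⟩, h3⟩ := hN n hn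
    refine (hup n h2).trans ?_
    have hV' := (hV n h2).le
    have hM : (∏ i : Fin d, ((m n : ℝ) + (i : ℕ) + 1)) ≤ ((c / e) ^ (n + 1)) ^ d := by
      have : ∀ i ∈ (Finset.univ : Finset (Fin d)),
          ((m n : ℝ) + (i : ℕ) + 1) ≤ (c / e) ^ (n + 1) := by
        intro i _
        refine le_trans ?_ h3
        have h4 : (m n : ℝ) ≤ m a + d * n := by exact_mod_cast hmb n h2
        have h5 : ((i : ℕ) : ℝ) + 1 ≤ d := by exact_mod_cast i.2
        have h6 : (0 : ℝ) ≤ (m a : ℝ) * n := by positivity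
        nlinarith
      simpa using Finset.prod_le_prod (fun i _ => by positivity) this
    have hT' : 0 ≤ ∏ j, T (n + 1) j := Finset.prod_nonneg fun j _ => hT0 _ (by omega) j
    rw [Finset.prod_pow, mul_assoc]
    have hfin : ((c / e) ^ (n + 1)) ^ d * (e ^ d) ^ (n + 1) = (c ^ d) ^ (n + 1) := by
      rw [← pow_mul, mul_comm (n + 1) d, pow_mul, ← mul_pow, ← mul_pow,
        div_mul_cancel₀ _ he.ne']
    rw [← hfin]
    have := h1.le
    gcongr
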